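/- Let G ∈ ℂ^{p×k} with p ≤ k and let V ∈ ℂ^{n×p} have columns of unit Euclidean norm. Then σ_p(G ⊙^T V^T) ≥ σ_p(G); in particular, if G has full row rank, then ‖(G ⊙^T V^T)†‖₂ ≤ σ_p(G)^{−1}. -/

import Mathlib

open Matrix Kronecker BigOperators

noncomputable section

/-- Frobenius norm of a complex matrix. -/
def fnorm {ι κ : Type*} [Fintype ι] [Fintype κ] (A : Matrix ι κ ℂ) : ℝ :=
  Real.sqrt (∑ i, ∑ j, ‖A i j‖ ^ 2)

/-- Euclidean norm of a complex vector. -/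
def vnorm {ι : Type*} [Fintype ι] (v : ι → ℂ) : ℝ :=
  Real.sqrt (∑ i, ‖v i‖ ^ 2)

/-- The four Moore–Penrose conditions. -/
def IsMoorePenrose {ι κ : Type*} [Fintype ι] [Fintype κ]
    (A : Matrix ι κ ℂ) (B : Matrix κ ι ℂ) : Prop :=
  A * B * A = A ∧ B * A * B = B ∧ (A * B)ᴴ = A * B ∧ (B * A)ᴴ = B * A

open scoped Classical in
/-- The Moore–Penrose pseudoinverse (defined by choice; it always exists and is unique). -/
noncomputable def pinv {ι κ : Type*} [Fintype ι] [Fintype κ] (A : Matrix ι κ ℂ) :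
    Matrix κ ι ℂ :=
  if h : ∃ B, IsMoorePenrose A B then h.choose else 0

/-- `s` is a singular value of `A`: `s ≥ 0` and `s²` is an eigenvalue of `Aᴴ A`. -/
def IsSingularValue {ι κ : Type*} [Fintype ι] [Fintype κ] (A : Matrix ι κ ℂ) (s : ℝ) : Prop :=
  0 ≤ s ∧ ∃ w : κ → ℂ, w ≠ 0 ∧ (Aᴴ * A).mulVec w = ((s : ℂ) ^ 2) • w

/-- The smallest nonzero singular value of `A`, i.e. `σ_p̂(A)` where `p̂ = rank A`. -/
noncomputable def sigmaMinPos {ι κ : Type*} [Fintype ι] [Fintype κ] (A : Matrix ι κ ℂ) : ℝ :=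
  sInf {s : ℝ | IsSingularValue A s ∧ 0 < s}

/-- The smallest singular value of a square matrix `A`, the minimum of `‖A v‖₂` over
unit vectors `v`. -/
noncomputable def sigmaMinSq {n : ℕ} (A : Matrix (Fin n) (Fin n) ℂ) : ℝ :=
  sInf {x : ℝ | ∃ w : Fin n → ℂ, vnorm w = 1 ∧ x = vnorm (A.mulVec w)}

/-- The transposed Khatri–Rao product `G ⊙^T W` of `G : p × k` and `W : p × n`:
the `p × kn` matrix whose `i`-th row is `[G i 1 • (row i of W), …, G i k • (row i of W)]`. -/
def krt {p k n : ℕ} (G : Matrix (Fin p) (Fin k) ℂ) (W : Matrix (Fin p) (Fin n) ℂ) :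
    Matrix (Fin p) (Fin k × Fin n) ℂ :=
  Matrix.of fun i jl => G i jl.1 * W i jl.2

/-- `σ_p(A)` for a matrix `A` with rows indexed by `ι` (`|ι| = p`): the smallest of the first
`p` singular values, characterized variationally as the minimum of `‖w^* A‖₂` over unit
vectors `w`. -/
noncomputable def sigRowMin {ι κ : Type*} [Fintype ι] [Fintype κ] (A : Matrix ι κ ℂ) : ℝ :=
  sInf {x : ℝ | ∃ w : ι → ℂ, vnorm w = 1 ∧ x = vnorm (Matrix.vecMul (star w) A)}

/-- `σ_p(A)` for a matrix `A` with columns indexed by `κ` (`|κ| = p`): the smallest of the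
first `p` singular values, characterized as the minimum of `‖A w‖₂` over unit vectors `w`. -/
noncomputable def sigColMin {ι κ : Type*} [Fintype ι] [Fintype κ] (A : Matrix ι κ ℂ) : ℝ :=
  sInf {x : ℝ | ∃ w : κ → ℂ, vnorm w = 1 ∧ x = vnorm (A.mulVec w)}

/-- `σ_1(A)`, the largest singular value (spectral norm) of `A`: the supremum of `‖A w‖₂`
over unit vectors `w`. -/
noncomputable def sigColMax {ι κ : Type*} [Fintype ι] [Fintype κ] (A : Matrix ι κ ℂ) : ℝ :=
  sSup {x : ℝ | ∃ w : κ → ℂ, vnorm w = 1 ∧ x = vnorm (A.mulVec w)}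

lemma aux_vnorm_eq {ι : Type*} [Fintype ι] (v : ι → ℂ) :
    vnorm v = ‖(WithLp.toLp 2 v : EuclideanSpace ℂ ι)‖ := by
  rw [EuclideanSpace.norm_eq]; rfl

lemma aux_vnorm_nonneg {ι : Type*} [Fintype ι] (v : ι → ℂ) : 0 ≤ vnorm v := Real.sqrt_nonneg _

lemma aux_vnorm_sq {ι : Type*} [Fintype ι] (v : ι → ℂ) : vnorm v ^ 2 = ∑ i, ‖v i‖ ^ 2 :=
  Real.sq_sqrt (Finset.sum_nonneg fun _ _ => sq_nonneg _)

lemma aux_vnorm_star {ι : Type*} [Fintype ι] (v : ι → ℂ) : vnorm (star v) = vnorm v := by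
  simp [vnorm]

lemma aux_vnorm_smul {ι : Type*} [Fintype ι] (c : ℂ) (v : ι → ℂ) :
    vnorm (c • v) = ‖c‖ * vnorm v := by
  rw [aux_vnorm_eq, aux_vnorm_eq, WithLp.toLp_smul, norm_smul]

lemma aux_vnorm_eq_zero {ι : Type*} [Fintype ι] (v : ι → ℂ) (h : vnorm v = 0) : v = 0 := by
  rw [aux_vnorm_eq, norm_eq_zero] at h
  simpa using h

lemma aux_cs {ι : Type*} [Fintype ι] (z y : ι → ℂ) :
    ‖star z ⬝ᵥ y‖ ≤ vnorm z * vnorm y := by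
  rw [aux_vnorm_eq, aux_vnorm_eq]
  have := norm_inner_le_norm (𝕜 := ℂ) (WithLp.toLp 2 z : EuclideanSpace ℂ ι) (WithLp.toLp 2 y)
  rw [EuclideanSpace.inner_eq_star_dotProduct, dotProduct_comm] at this
  exact this

lemma aux_dot_self {ι : Type*} [Fintype ι] (z : ι → ℂ) :
    star z ⬝ᵥ z = ((vnorm z ^ 2 : ℝ) : ℂ) := by
  rw [aux_vnorm_sq]
  simp [dotProduct, Complex.conj_mul']

lemma aux_sig_nonneg {ι κ : Type*} [Fintype ι] [Fintype κ] (A : Matrix ι κ ℂ) :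
    0 ≤ sigRowMin A := by
  apply Real.sInf_nonneg
  rintro x ⟨w, -, rfl⟩
  exact aux_vnorm_nonneg _

lemma aux_sig_le {ι κ : Type*} [Fintype ι] [Fintype κ] (A : Matrix ι κ ℂ) (u : ι → ℂ) :
    sigRowMin A * vnorm u ≤ vnorm (Matrix.vecMul (star u) A) := by
  by_cases h : vnorm u = 0
  · rw [h, mul_zero]; exact aux_vnorm_nonneg _
  have hp : 0 < vnorm u := lt_of_le_of_ne (aux_vnorm_nonneg _) (Ne.symm h)
  have key : sigRowMin A ≤ (vnorm u)⁻¹ * vnorm (Matrix.vecMul (star u) A) := by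
    apply csInf_le
    · refine ⟨0, ?_⟩
      rintro x ⟨w, -, rfl⟩
      exact aux_vnorm_nonneg _
    · refine ⟨(((vnorm u)⁻¹ : ℝ) : ℂ) • u, ?_, ?_⟩
      · rw [aux_vnorm_smul, Complex.norm_real, Real.norm_of_nonneg (by positivity)]
        field_simp
      · rw [star_smul, smul_vecMul, aux_vnorm_smul, norm_star, Complex.norm_real,
          Real.norm_of_nonneg (by positivity)]
  calc _ ≤ ((vnorm u)⁻¹ * vnorm (Matrix.vecMul (star u) A)) * vnorm u := by gcongr
    _ = _ := by field_simp

lemma aux_le_sig {ι κ : Type*} [Fintype ι] [Fintype κ] [Nonempty ι] (A : Matrix ι κ ℂ) (c : ℝ)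
    (h : ∀ w, c * vnorm w ≤ vnorm (Matrix.vecMul (star w) A)) : c ≤ sigRowMin A := by
  classical
  apply le_csInf
  · obtain ⟨i⟩ := ‹Nonempty ι›
    refine ⟨_, Pi.single i 1, ?_, rfl⟩
    rw [aux_vnorm_eq]
    simp
  · rintro x ⟨w, hw, rfl⟩
    simpa [hw] using h w

lemma aux_krt {n k p : ℕ} (G : Matrix (Fin p) (Fin k) ℂ) (V : Matrix (Fin n) (Fin p) ℂ)
    (hV : ∀ i, vnorm (fun l => V l i) = 1) (w : Fin p → ℂ) :
    sigRowMin G * vnorm w ≤ vnorm (Matrix.vecMul (star w) (krt G Vᵀ)) := by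
  apply le_of_sq_le_sq _ (aux_vnorm_nonneg _)
  have h1 : vnorm (Matrix.vecMul (star w) (krt G Vᵀ)) ^ 2
      = ∑ l, vnorm (Matrix.vecMul (star (fun i => w i * star (V l i))) G) ^ 2 := by
    simp_rw [aux_vnorm_sq]
    rw [Fintype.sum_prod_type, Finset.sum_comm]
    refine Finset.sum_congr rfl fun l _ => Finset.sum_congr rfl fun j _ => ?_
    congr 2
    simp only [vecMul, dotProduct, krt, of_apply, transpose_apply, Pi.star_apply, star_mul', star_star]
    exact Finset.sum_congr rfl fun i _ => by ring
  have h2 : vnorm w ^ 2 = ∑ l, vnorm (fun i => w i * star (V l i)) ^ 2 := by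
    simp_rw [aux_vnorm_sq]
    rw [Finset.sum_comm]
    refine Finset.sum_congr rfl fun i _ => ?_
    have := aux_vnorm_sq (fun l => V l i)
    rw [hV i] at this
    simp only [norm_mul, norm_star, mul_pow]
    rw [← Finset.mul_sum, ← this]; ring
  rw [h1, mul_pow, h2, Finset.mul_sum]
  refine Finset.sum_le_sum fun l _ => ?_
  rw [← mul_pow]
  exact pow_le_pow_left₀ (mul_nonneg (aux_sig_nonneg _) (aux_vnorm_nonneg _)) (aux_sig_le _ _) 2

open scoped Matrix.Norms.L2Operator in
lemma aux_bdd {ι κ : Type*} [Fintype ι] [Fintype κ] (B : Matrix ι κ ℂ) :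
    ∃ C : ℝ, 0 < C ∧ ∀ v, vnorm (Matrix.vecMul v B) ≤ C * vnorm v := by
  classical
  refine ⟨‖Bᵀ‖ + 1, by positivity, fun v => ?_⟩
  have := Matrix.l2_opNorm_mulVec Bᵀ (WithLp.toLp 2 v)
  rw [← mulVec_transpose, aux_vnorm_eq, aux_vnorm_eq]
  refine this.trans ?_
  gcongr
  linarith

lemma aux_pos {k p : ℕ} [Nonempty (Fin p)] (G : Matrix (Fin p) (Fin k) ℂ) (h : G.rank = p) :
    0 < sigRowMin G := by
  have hs : Function.Surjective G.mulVec := by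
    have : LinearMap.range G.mulVecLin = ⊤ := by
      apply Submodule.eq_top_of_finrank_eq
      rw [← Matrix.rank, h]; simp
    exact LinearMap.range_eq_top.mp this
  obtain ⟨B, hB⟩ := Matrix.mulVec_surjective_iff_exists_right_inverse.mp hs
  obtain ⟨C, hC, hb⟩ := aux_bdd B
  refine lt_of_lt_of_le (inv_pos.mpr hC) (aux_le_sig G _ fun w => ?_)
  have := hb (Matrix.vecMul (star w) G)
  rw [vecMul_vecMul, hB, vecMul_one, aux_vnorm_star] at this
  rwa [inv_mul_le_iff₀ hC]

lemma aux_mp {ι κ : Type*} [Fintype ι] [Fintype κ] (A : Matrix ι κ ℂ) (B : Matrix κ ι ℂ)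
    (hAB : IsMoorePenrose A B) (c : ℝ) (hc : 0 < c)
    (h : ∀ w, c * vnorm w ≤ vnorm (Matrix.vecMul (star w) A)) (y : ι → ℂ) :
    c * vnorm (B.mulVec y) ≤ vnorm y := by
  classical
  obtain ⟨h1, h2, h3, h4⟩ := hAB
  have hone : A * B = 1 := by
    have h0 : (A * B - 1) * A = 0 := by rw [Matrix.sub_mul, h1, Matrix.one_mul, sub_self]
    rw [← sub_eq_zero]
    ext i j
    have hi := h (star ((A * B - 1 : Matrix ι ι ℂ) i))
    have hz : Matrix.vecMul ((A * B - 1 : Matrix ι ι ℂ) i) A = 0 := by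
      ext j
      exact congrFun (congrFun h0 i) j
    rw [star_star, hz] at hi
    have hv0 : vnorm (0 : κ → ℂ) = 0 := by simp [vnorm]
    rw [hv0, aux_vnorm_star] at hi
    have hn := aux_vnorm_nonneg ((A * B - 1 : Matrix ι ι ℂ) i)
    exact congrFun (aux_vnorm_eq_zero _ (le_antisymm (by nlinarith) hn)) j
  have hB : B = Aᴴ * (Bᴴ * B) := by
    rw [← Matrix.mul_assoc, ← conjTranspose_mul, h4, h2]
  set x := B.mulVec y with hx
  set z := (Bᴴ * B).mulVec y with hz
  have hxz : x = Aᴴ.mulVec z := by rw [hz, mulVec_mulVec, ← hB]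
  have hAx : A.mulVec x = y := by rw [hx, mulVec_mulVec, hone, one_mulVec]
  have hsx : star x = Matrix.vecMul (star z) A := by
    rw [hxz, star_mulVec, conjTranspose_conjTranspose]
  have hzx : c * vnorm z ≤ vnorm x := by
    have := h z
    rwa [← hsx, aux_vnorm_star] at this
  have hxx : vnorm x ^ 2 ≤ vnorm z * vnorm y := by
    have e := aux_cs z y
    rw [← hAx, dotProduct_mulVec, ← hsx, aux_dot_self, Complex.norm_real,
      Real.norm_of_nonneg (sq_nonneg _), hAx] at e
    exact e
  have hx0 := aux_vnorm_nonneg x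
  have hy0 := aux_vnorm_nonneg y
  rcases hx0.eq_or_lt with h0 | h0
  · rw [← h0]; simpa using hy0
  · have : vnorm x * (c * vnorm x) ≤ vnorm x * vnorm y := by
      nlinarith [mul_le_mul_of_nonneg_left hxx hc.le, mul_le_mul_of_nonneg_right hzx hy0]
    exact le_of_mul_le_mul_left this h0

/-- If `p ≤ k` and every column of `V` has unit Euclidean norm, then
`σ_p(G ⊙ᵀ Vᵀ) ≥ σ_p(G)`; in particular, if `G` has full row rank, then
`‖(G ⊙ᵀ Vᵀ)†‖₂ ≤ σ_p(G)⁻¹`. -/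
theorem khatri_rao_sigma_min_bound_few_pairs (n k p : ℕ) (hpk : p ≤ k)
    (G : Matrix (Fin p) (Fin k) ℂ) (V : Matrix (Fin n) (Fin p) ℂ)
    (hV : ∀ i, vnorm (fun l => V l i) = 1) :
    sigRowMin G ≤ sigRowMin (krt G Vᵀ) ∧
    (G.rank = p → sigColMax (pinv (krt G Vᵀ)) ≤ (sigRowMin G)⁻¹) := by
  rcases isEmpty_or_nonempty (Fin p) with he | hne
  · have hv : ∀ w : Fin p → ℂ, vnorm w ≠ 1 := fun w => by simp [vnorm]
    simp [sigRowMin, sigColMax, hv]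
  refine ⟨aux_le_sig _ _ (aux_krt G V hV), fun hr => ?_⟩
  have hpos := aux_pos G hr
  apply Real.sSup_le _ (inv_nonneg.mpr hpos.le)
  rintro x ⟨y, hy, rfl⟩
  unfold pinv
  split_ifs with hex
  · have := aux_mp _ _ hex.choose_spec _ hpos (aux_krt G V hV) y
    rw [hy] at this
    rwa [← mul_one (sigRowMin G)⁻¹, le_inv_mul_iff₀ hpos]
  · rw [zero_mulVec]
    simpa [vnorm] using hpos.le
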